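/- Let (p,q) be admissible. If the curve EF2: y² = x³ + ((p²−q²)⁴+16p⁴q⁴)x² + 16p⁴q⁴(p²−q²)⁴x has only finitely many rational points, then there do not exist positive integers u, v, W and a squarefree positive integer M such that u·2pq = v·(p²−q²), u²+v² is a perfect square, and W, M·u²+W, M·v²+W, and M·(u²+v²)+W are all perfect squares. (The case M = 1 says no perfect cuboid has a face with aspect ratio (p²−q²):2pq; the case M > 1 says no F-BPC has a Pythagorean face with that aspect ratio.) -/

import Mathlib

/-!
Write `a = p² - q²`, `b = 2pq`, so that `EF2` is `y² = x(x + a⁴)(x + b⁴)`. After scaling `u : v` to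
`a : b`, the three square roots in the cuboid make `x`, `x + a⁴`, `x + b⁴` squares at a point of
`EF2`, other than the evident ones with `x = 0` or `x = a²b²`. When `EF2` is finite no such point
exists:

* A point whose `x` is not `ℓ`-integral is `ℓ`-adically close to infinity, and its `ℓ`-th multiple
  is closer still. Hence all points are integral. Applied to the translate by the `2`-torsion point
  `(0, 0)`, this shows that the root `X = √x` divides `a²b²`.
* Take `a`, `b` coprime. Factoring `X` along `a²` and `b²` in the formula for the double of the
  point shows that the root `X₂` of the double satisfies `2 X₂ = d² c` with `c ∣ 2`. As
  `X₂² + a⁴` is a square, this solves `d⁴ + a⁴ = z²` or `d⁴ + 4a⁴ = z²`, against Fermat.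
-/

/-- The elliptic curve EF2: `y² = x³ + ((p²−q²)⁴+16p⁴q⁴)x² + 16p⁴q⁴(p²−q²)⁴x`, as a set of
rational points. -/
def EF2 (p q : ℤ) : Set (ℚ × ℚ) :=
  {P | P.2 ^ 2 = P.1 ^ 3 + (((p : ℚ) ^ 2 - (q : ℚ) ^ 2) ^ 4 + 16 * (p : ℚ) ^ 4 * (q : ℚ) ^ 4) * P.1 ^ 2 +
    16 * (p : ℚ) ^ 4 * (q : ℚ) ^ 4 * ((p : ℚ) ^ 2 - (q : ℚ) ^ 2) ^ 4 * P.1}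

/-- The affine points of the curve `y² = x³ + c₂x² + c₄x`. -/
def affinePoints {R : Type*} [CommRing R] (c₂ c₄ : R) : Set (R × R) :=
  {P | P.2 ^ 2 = P.1 ^ 3 + c₂ * P.1 ^ 2 + c₄ * P.1}

/-- The curve `y² = x³ + c₂x² + c₄x` near its point at infinity, in the coordinates `z = x / y`
and `w = 1 / y`. -/
def pointsNearInfinity {R : Type*} [CommRing R] (c₂ c₄ : R) : Set (R × R) :=
  {P | P.2 = P.1 ^ 3 + c₂ * P.1 ^ 2 * P.2 + c₄ * P.1 * P.2 ^ 2}

/-! ### Integrality of the points of a finite curve -/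

section ChordLaw

variable {R : Type*} [CommRing R] {I : Ideal R} {c₂ c₄ z₁ w₁ z₂ w₂ : R}

lemma isUnit_one_add_of_mem (hI : I ≤ Ideal.jacobson ⊥) {a : R} (ha : a ∈ I) :
    IsUnit (1 + a) := by
  simpa [add_comm] using Ideal.mem_jacobson_bot.mp (hI ha) 1

-- The formula for the slope has no denominator `z₂ - z₁`, so it also covers tangents.
lemma exists_chord_pointsNearInfinity (hI : I ≤ Ideal.jacobson ⊥) (hc₂ : c₂ ∈ I) (hc₄ : c₄ ∈ I)
    (h₁ : (z₁, w₁) ∈ pointsNearInfinity c₂ c₄) (h₂ : (z₂, w₂) ∈ pointsNearInfinity c₂ c₄) :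
    ∃ l m : R, w₁ = l * z₁ + m ∧ w₂ = l * z₂ + m ∧
      l * (1 - c₂ * z₂ ^ 2 - c₄ * z₂ * (w₁ + w₂)) =
        z₁ ^ 2 + z₁ * z₂ + z₂ ^ 2 + c₂ * w₁ * (z₁ + z₂) + c₄ * w₁ ^ 2 := by
  simp only [pointsNearInfinity, Set.mem_ofPred_eq] at h₁ h₂
  have hunit : IsUnit (1 + (-z₂ ^ 2 * c₂ + -z₂ * (w₁ + w₂) * c₄)) :=
    isUnit_one_add_of_mem hI (add_mem (I.mul_mem_left _ hc₂) (I.mul_mem_left _ hc₄))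
  obtain ⟨i, hi⟩ := hunit.exists_right_inv
  set N := z₁ ^ 2 + z₁ * z₂ + z₂ ^ 2 + c₂ * w₁ * (z₁ + z₂) + c₄ * w₁ ^ 2 with hN
  refine ⟨N * i, w₁ - N * i * z₁, by ring, hunit.mul_left_cancel ?_, by linear_combination N * hi⟩
  linear_combination h₂ - h₁ - (z₂ - z₁) * hN - N * (z₂ - z₁) * hi

/-- `(z, w)` is the negative of the third point on the chord. -/
lemma exists_add_pointsNearInfinity (hI : I ≤ Ideal.jacobson ⊥) (hc₂ : c₂ ∈ I) (hc₄ : c₄ ∈ I)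
    (h₁ : (z₁, w₁) ∈ pointsNearInfinity c₂ c₄) (h₂ : (z₂, w₂) ∈ pointsNearInfinity c₂ c₄) :
    ∃ z w : R, (z, w) ∈ pointsNearInfinity c₂ c₄ ∧ z - (z₁ + z₂) ∈ I := by
  obtain ⟨l, m, rfl, rfl, hl⟩ := exists_chord_pointsNearInfinity hI hc₂ hc₄ h₁ h₂
  obtain ⟨j, hj⟩ := (isUnit_one_add_of_mem hI
    (add_mem (I.mul_mem_left l hc₂) (I.mul_mem_left (l ^ 2) hc₄))).exists_right_inv
  obtain ⟨T, hT⟩ : ∃ T, T = (m * c₂ + 2 * l * m * c₄) * j := ⟨_, rfl⟩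
  have hTI : T ∈ I :=
    hT ▸ I.mul_mem_right j (add_mem (I.mul_mem_left _ hc₂) (I.mul_mem_left _ hc₄))
  refine ⟨z₁ + z₂ + T, l * (z₁ + z₂ + T) - m, ?_, by simpa using hTI⟩
  have hTl : T * (1 + (l * c₂ + l ^ 2 * c₄)) = m * c₂ + 2 * l * m * c₄ := by
    linear_combination (1 + (l * c₂ + l ^ 2 * c₄)) * hT + (m * c₂ + 2 * l * m * c₄) * hj
  simp only [pointsNearInfinity, Set.mem_ofPred_eq] at h₁ ⊢
  -- The third point of the chord has `z = t`; expand the cubic in Newton form at `z₁`, `z₂`.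
  obtain ⟨t, ht⟩ : ∃ t, t = -(z₁ + z₂ + T) := ⟨_, rfl⟩
  rw [show z₁ + z₂ + T = -t by rw [ht, neg_neg]]
  linear_combination -h₁ - (t - z₁) * hl
    + (t - z₁) * (t - z₂) * ((1 + (l * c₂ + l ^ 2 * c₄)) * ht - hTl)

lemma exists_nsmul_pointsNearInfinity (hI : I ≤ Ideal.jacobson ⊥) (hc₂ : c₂ ∈ I) (hc₄ : c₄ ∈ I)
    (h₁ : (z₁, w₁) ∈ pointsNearInfinity c₂ c₄) (n : ℕ) :
    ∃ z w : R, (z, w) ∈ pointsNearInfinity c₂ c₄ ∧ z - n * z₁ ∈ I := by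
  induction n with
  | zero => exact ⟨0, 0, by simp [pointsNearInfinity], by simp⟩
  | succ n ih =>
    obtain ⟨z, w, hzw, hz⟩ := ih
    obtain ⟨z', w', hzw', hz'⟩ := exists_add_pointsNearInfinity hI hc₂ hc₄ hzw h₁
    refine ⟨z', w', hzw', ?_⟩
    convert add_mem hz' hz using 1
    push_cast
    ring

end ChordLaw

section Field

variable {K : Type*} [Field K] {c₂ c₄ x y : K}

lemma mem_affinePoints_of_mem_pointsNearInfinity {s z w : K} (hs : s ≠ 0) (hw : w ≠ 0)
    (h : (z, w) ∈ pointsNearInfinity (c₂ * s ^ 2) (c₄ * s ^ 4)) :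
    (z / (s ^ 2 * w), 1 / (s ^ 3 * w)) ∈ affinePoints c₂ c₄ := by
  simp only [pointsNearInfinity, affinePoints, Set.mem_ofPred_eq] at h ⊢
  field_simp
  linear_combination h

lemma mem_pointsNearInfinity_of_mem_affinePoints (hx : x ≠ 0) (hy : y ≠ 0)
    (h : (x, y) ∈ affinePoints c₂ c₄) :
    (1, y ^ 2 / x ^ 3) ∈ pointsNearInfinity (c₂ * (x / y) ^ 2) (c₄ * (x / y) ^ 4) := by
  simp only [pointsNearInfinity, affinePoints, Set.mem_ofPred_eq] at h ⊢
  field_simp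
  linear_combination h

lemma affinePoints_finite_of_scale {d : K} (hd : d ≠ 0)
    (h : (affinePoints (d ^ 2 * c₂) (d ^ 4 * c₄)).Finite) : (affinePoints c₂ c₄).Finite := by
  refine h.of_injOn (f := fun P ↦ (d ^ 2 * P.1, d ^ 3 * P.2)) ?_ ?_
  · intro P hP
    simp only [affinePoints, Set.mem_ofPred_eq] at hP ⊢
    linear_combination d ^ 6 * hP
  · intro P _ Q _ hPQ
    simpa [hd, Prod.ext_iff] using hPQ

end Field

section Valuation

variable {K Γ₀ : Type*} [Field K] [LinearOrderedCommGroupWithZero Γ₀] (v : Valuation K Γ₀)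
  {c₂ c₄ x y : K}

lemma valuation_sq_div_cube_eq_one (hc₂ : v c₂ ≤ 1) (hc₄ : v c₄ ≤ 1) (hx : 1 < v x)
    (h : (x, y) ∈ affinePoints c₂ c₄) : v (y ^ 2 / x ^ 3) = 1 := by
  have hx0 : x ≠ 0 := v.ne_zero_iff.mp (zero_lt_one.trans hx).ne'
  have hxinv : v x⁻¹ < 1 := by simpa using inv_lt_one_of_one_lt₀ hx
  have hyx : y ^ 2 / x ^ 3 = 1 + x⁻¹ * (c₂ + c₄ * x⁻¹) := by
    rw [show y ^ 2 = x ^ 3 + c₂ * x ^ 2 + c₄ * x from h]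
    field_simp
    ring
  rw [hyx]
  refine v.map_one_add_of_lt ?_
  rw [map_mul]
  refine mul_lt_one_of_lt_of_le hxinv (v.map_add_le hc₂ ?_)
  rw [map_mul]
  exact mul_le_one' hc₄ hxinv.le

lemma valuation_div_lt_one (hx : 1 < v x) (h : v (y ^ 2 / x ^ 3) = 1) : v (x / y) < 1 := by
  have hx0 : x ≠ 0 := v.ne_zero_iff.mp (zero_lt_one.trans hx).ne'
  have hxy : (x / y) ^ 2 * (y ^ 2 / x ^ 3) = x⁻¹ := by
    have hy0 : y ≠ 0 := by rintro rfl; simp at h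
    field_simp
  have hsq : v (x / y) ^ 2 = (v x)⁻¹ := by
    rw [← map_pow, ← map_inv₀, ← hxy, map_mul, h, mul_one]
  exact (pow_lt_one_iff two_ne_zero).mp (hsq ▸ inv_lt_one_of_one_lt₀ hx)

lemma valuation_snd_of_mem_pointsNearInfinity {z w : K} (hz : v z ≤ 1) (hw : v w ≤ 1)
    (hc₂ : v c₂ < 1) (hc₄ : v c₄ < 1) (h : (z, w) ∈ pointsNearInfinity c₂ c₄) :
    v w = v z ^ 3 := by
  have hcube : w * (1 + -(c₂ * z ^ 2 + c₄ * (z * w))) = z ^ 3 := by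
    simp only [pointsNearInfinity, Set.mem_ofPred_eq] at h
    linear_combination h
  have hunit : v (1 + -(c₂ * z ^ 2 + c₄ * (z * w))) = 1 := by
    refine v.map_one_add_of_lt ?_
    rw [v.map_neg]
    refine v.map_add_lt ?_ ?_ <;> rw [map_mul]
    · exact mul_lt_one_of_lt_of_le hc₂ (by simpa using pow_le_one' hz 2)
    · exact mul_lt_one_of_lt_of_le hc₄ (by simpa using mul_le_one' hz hw)
  rw [← map_pow, ← hcube, map_mul, hunit, mul_one]

/-- `(z, w)` is the `n`-th multiple of `(1, u)`; its coordinate `z` is `n` modulo `n²`. -/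
lemma exists_valuation_eq_of_mem_pointsNearInfinity {n : ℕ} (hn : v n < 1)
    (hmax : ∀ a, v a < 1 → v a ≤ v n) (hn0 : (n : K) ≠ 0) (hc₂ : v c₂ ≤ 1) (hc₄ : v c₄ ≤ 1)
    {s u : K} (hs : v s < 1) (hu : v u ≤ 1)
    (h : (1, u) ∈ pointsNearInfinity (c₂ * s ^ 2) (c₄ * s ^ 4)) :
    ∃ z w : K, (z, w) ∈ pointsNearInfinity (c₂ * s ^ 2) (c₄ * s ^ 4) ∧ v z = v n ∧ v w ≤ 1 := by
  let A := v.integer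
  let I : Ideal A := Ideal.span {(n : A) ^ 2}
  have hvn : ∀ a : A, v ((n : A) ^ 2 * a : A) < v n := fun a ↦ by
    push_cast
    rw [pow_two, map_mul, map_mul, mul_assoc]
    exact mul_lt_of_lt_one_right (v.pos_iff.mpr hn0) (mul_lt_one_of_lt_of_le hn a.2)
  have hI : I ≤ Ideal.jacobson ⊥ := by
    rw [Ideal.span_singleton_le_iff_mem, Ideal.mem_jacobson_bot]
    refine fun a ↦ (Valuation.integer.integers v).isUnit_of_one' ?_
    rw [add_comm]
    exact v.map_one_add_of_lt ((hvn a).trans hn)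
  let sA : A := ⟨s, hs.le⟩
  have hns : (n : A) ∣ sA := (Valuation.integer.integers v).dvd_of_le (hmax s hs)
  have hI2 : sA ^ 2 ∈ I := Ideal.mem_span_singleton.mpr (pow_dvd_pow_of_dvd hns 2)
  have hI4 : sA ^ 4 ∈ I := Ideal.mem_span_singleton.mpr
    ((pow_dvd_pow_of_dvd hns 2).trans (pow_dvd_pow sA (by norm_num)))
  let c₂A : A := ⟨c₂, hc₂⟩
  let c₄A : A := ⟨c₄, hc₄⟩
  let uA : A := ⟨u, hu⟩
  obtain ⟨z, w, hzw, hz⟩ := exists_nsmul_pointsNearInfinity hI (I.mul_mem_left c₂A hI2)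
    (I.mul_mem_left c₄A hI4) (show (1, uA) ∈ pointsNearInfinity _ _ from Subtype.ext h) n
  obtain ⟨a, ha⟩ := Ideal.mem_span_singleton.mp hz
  have hza : (z : K) = n + ((n : A) ^ 2 * a : A) := by
    rw [← ha]
    push_cast
    ring
  exact ⟨z, w, congrArg Subtype.val hzw, hza ▸ v.map_add_eq_of_lt_left (hvn a), w.2⟩

lemma exists_closer_to_infinity {n : ℕ} (hn : v n < 1) (hmax : ∀ a, v a < 1 → v a ≤ v n)
    (hn0 : (n : K) ≠ 0) (hc₂ : v c₂ ≤ 1) (hc₄ : v c₄ ≤ 1) (hx : 1 < v x)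
    (h : (x, y) ∈ affinePoints c₂ c₄) :
    ∃ P ∈ affinePoints c₂ c₄, 1 < v P.1 ∧ v (P.1 / P.2) < v (x / y) := by
  have hu := valuation_sq_div_cube_eq_one v hc₂ hc₄ hx h
  have hs := valuation_div_lt_one v hx hu
  have hx0 : x ≠ 0 := v.ne_zero_iff.mp (zero_lt_one.trans hx).ne'
  have hy0 : y ≠ 0 := by rintro rfl; simp at hu
  obtain ⟨z, w, hzw, hz, hw⟩ := exists_valuation_eq_of_mem_pointsNearInfinity v hn hmax hn0
    hc₂ hc₄ hs hu.le (mem_pointsNearInfinity_of_mem_affinePoints hx0 hy0 h)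
  obtain ⟨s, hsxy⟩ : ∃ s, s = x / y := ⟨_, rfl⟩
  have hs0 : s ≠ 0 := hsxy ▸ div_ne_zero hx0 hy0
  rw [← hsxy] at hs hzw ⊢
  have hvw : v w = v z ^ 3 := by
    refine valuation_snd_of_mem_pointsNearInfinity v (hz.trans_le hn.le) hw ?_ ?_ hzw <;>
      rw [mul_comm, map_mul, map_pow]
    · exact mul_lt_one_of_lt_of_le (pow_lt_one₀ zero_le hs two_ne_zero) hc₂
    · exact mul_lt_one_of_lt_of_le (pow_lt_one₀ zero_le hs four_ne_zero) hc₄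
  have hz0 : z ≠ 0 := v.ne_zero_iff.mp (hz ▸ v.ne_zero_iff.mpr hn0)
  have hw0 : w ≠ 0 := v.ne_zero_iff.mp (hvw ▸ pow_ne_zero 3 (v.ne_zero_iff.mpr hz0))
  refine ⟨_, mem_affinePoints_of_mem_pointsNearInfinity hs0 hw0 hzw, ?_, ?_⟩
  · have hvx : v (z / (s ^ 2 * w)) = ((v s * v z) ^ 2)⁻¹ := by
      have hvz : v z ≠ 0 := v.ne_zero_iff.mpr hz0
      simp only [map_div₀, map_mul, map_pow, hvw]
      field_simp
    rw [hvx]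
    have hsz : v s * v z < 1 := mul_lt_one_of_lt_of_le hs (hz.trans_le hn.le)
    have hsz0 : 0 < v s * v z := by simp [zero_lt_iff, hs0, hz0]
    exact (one_lt_inv₀ (pow_pos hsz0 2)).mpr (pow_lt_one₀ zero_le hsz two_ne_zero)
  · have hzs : z / (s ^ 2 * w) / (1 / (s ^ 3 * w)) = s * z := by field_simp
    rw [hzs, map_mul, hz]
    exact mul_lt_of_lt_one_right (v.pos_iff.mpr hs0) hn

/-- Among the points outside the valuation ring, one closest to infinity would have a multiple that
is closer still. -/
lemma valuation_le_one_of_finite_affinePoints {n : ℕ} (hn : v n < 1)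
    (hmax : ∀ a, v a < 1 → v a ≤ v n) (hn0 : (n : K) ≠ 0) (hc₂ : v c₂ ≤ 1) (hc₄ : v c₄ ≤ 1)
    (hfin : (affinePoints c₂ c₄).Finite) (h : (x, y) ∈ affinePoints c₂ c₄) : v x ≤ 1 := by
  by_contra! hx
  obtain ⟨P, ⟨hP, hvP⟩, hmin⟩ := Set.exists_min_image {P ∈ affinePoints c₂ c₄ | 1 < v P.1}
    (fun P ↦ v (P.1 / P.2)) (hfin.sep _) ⟨(x, y), h, hx⟩
  obtain ⟨Q, hQ, hvQ, hlt⟩ := exists_closer_to_infinity v hn hmax hn0 hc₂ hc₄ hvP hP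
  exact (hmin Q ⟨hQ, hvQ⟩).not_gt hlt

end Valuation

lemma isIntegral_of_mem_affinePoints {c₂ c₄ : ℤ} (hfin : (affinePoints (c₂ : ℚ) c₄).Finite)
    {x y : ℚ} (h : (x, y) ∈ affinePoints (c₂ : ℚ) c₄) : IsIntegral ℤ x := by
  rw [IsIntegrallyClosed.isIntegral_iff]
  refine IsDedekindDomain.HeightOneSpectrum.mem_integers_of_valuation_le_one ℚ x fun v ↦ ?_
  obtain ⟨n, hn⟩ : ∃ n : ℕ, v.asIdeal = Ideal.span {(n : ℤ)} :=
    ⟨_, (Int.span_natAbs _).symm ▸ (Ideal.span_singleton_generator v.asIdeal).symm⟩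
  have hn0 : (n : ℤ) ≠ 0 := fun h0 ↦ v.ne_bot (by simpa [h0] using hn)
  have hvn : v.valuation ℚ n = WithZero.exp (-1 : ℤ) := by
    simpa using (v.valuation_of_algebraMap (K := ℚ) (n : ℤ)).trans
      (v.intValuation_singleton hn0 hn)
  have hint (c : ℤ) : v.valuation ℚ c ≤ 1 := by simpa using v.valuation_le_one (K := ℚ) c
  refine valuation_le_one_of_finite_affinePoints (v.valuation ℚ) (n := n) ?_ (fun a ha ↦ ?_)
    (by exact_mod_cast hn0) (hint c₂) (hint c₄) hfin h
  · rw [hvn, ← WithZero.exp_zero, WithZero.exp_lt_exp]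
    norm_num
  · rw [hvn]
    rcases eq_or_ne (v.valuation ℚ a) 0 with h0 | h0
    · simp [h0]
    · rw [← WithZero.log_le_iff_le_exp h0]
      have := (WithZero.log_lt_iff_lt_exp h0).mpr (WithZero.exp_zero (M := ℤ) ▸ ha)
      omega

section Integers

lemma exists_isCoprime_eq_mul {x y : ℤ} (hx : x ≠ 0) :
    ∃ d x' y' : ℤ, d ≠ 0 ∧ IsCoprime x' y' ∧ x = d * x' ∧ y = d * y' := by
  have hgcd : 0 < Int.gcd x y := Int.gcd_pos_of_ne_zero_left y hx
  obtain ⟨x', y', hxy, hx', hy'⟩ := Int.exists_gcd_one hgcd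
  exact ⟨Int.gcd x y, x', y', by exact_mod_cast hgcd.ne', Int.isCoprime_iff_gcd_eq_one.mpr hxy,
    by rw [mul_comm, ← hx'], by rw [mul_comm, ← hy']⟩

lemma exists_eq_mul_sq_of_mul_eq_sq {x y z : ℤ} (hz : z ≠ 0) (h : x * y = z ^ 2) :
    ∃ g s t : ℤ, IsCoprime s t ∧ x = g * s ^ 2 ∧ y = g * t ^ 2 ∧ z = g * s * t := by
  have hx : x ≠ 0 := left_ne_zero_of_mul (h ▸ pow_ne_zero 2 hz)
  obtain ⟨g, x, y, hg, hxy, rfl, rfl⟩ := exists_isCoprime_eq_mul (y := y) hx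
  obtain ⟨z, rfl⟩ : g ∣ z :=
    (Int.pow_dvd_pow_iff two_ne_zero).mp ⟨x * y, by linear_combination -h⟩
  have hxyz : x * y = z ^ 2 := mul_left_cancel₀ (pow_ne_zero 2 hg) (by linear_combination h)
  obtain ⟨e, s, he, rfl⟩ : ∃ e s : ℤ, e ^ 2 = 1 ∧ x = e * s ^ 2 := by
    obtain ⟨s, rfl | rfl⟩ := Int.sq_of_isCoprime hxy hxyz
    · exact ⟨1, s, by norm_num, by ring⟩
    · exact ⟨-1, s, by norm_num, by ring⟩
  have hs : s ≠ 0 := by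
    rintro rfl
    simp at hx
  obtain ⟨t, rfl⟩ : s ∣ z :=
    (Int.pow_dvd_pow_iff two_ne_zero).mp ⟨e * y, by linear_combination -hxyz⟩
  have hy : y = e * t ^ 2 := mul_left_cancel₀ (pow_ne_zero 2 hs)
    (by linear_combination e * hxyz - s ^ 2 * y * he)
  refine ⟨g * e, s, e * t, ?_, by ring, ?_, ?_⟩
  · have he' : IsUnit e := IsUnit.of_mul_eq_one e (by linear_combination he)
    exact (isCoprime_mul_unit_left_right he' s t).mpr
      ((IsCoprime.pow_iff two_pos two_pos).mp (hy ▸ hxy).of_mul_left_right.of_mul_right_right)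
  · linear_combination g * hy - g * e * t ^ 2 * he
  · linear_combination -(g * s * t) * he

lemma exists_factors_of_dvd_sq_mul_sq {a b x : ℤ} (ha : a ≠ 0) (hb : b ≠ 0)
    (h : x ∣ a ^ 2 * b ^ 2) :
    ∃ g s t k m n : ℤ, IsCoprime s t ∧ IsCoprime m n ∧ a = g * s * t ∧ b = k * m * n ∧
      x = (g * s ^ 2) * (k * m ^ 2) := by
  obtain ⟨x₁, x₂, ⟨y₁, h₁⟩, ⟨y₂, h₂⟩, rfl⟩ := exists_dvd_and_dvd_of_dvd_mul h
  obtain ⟨g, s, t, hst, rfl, -, rfl⟩ := exists_eq_mul_sq_of_mul_eq_sq ha h₁.symm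
  obtain ⟨k, m, n, hmn, rfl, -, rfl⟩ := exists_eq_mul_sq_of_mul_eq_sq hb h₂.symm
  exact ⟨g, s, t, k, m, n, hst, hmn, rfl, rfl, rfl⟩

lemma isCoprime_left_of_sq_eq_sq_add_sq {x y z : ℤ} (h : x ^ 2 = y ^ 2 + z ^ 2)
    (hyz : IsCoprime y z) : IsCoprime x y := by
  have : IsCoprime (x ^ 2) y := by
    rw [h, add_comm, pow_two y]
    exact hyz.symm.pow_left.add_mul_left_left y
  exact (IsCoprime.pow_left_iff two_pos).mp this

lemma isCoprime_pow_four_sub_pow_four {x y : ℤ} (h : IsCoprime x y) :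
    IsCoprime (x ^ 4 - y ^ 4) (x * y) := by
  refine IsCoprime.mul_right ?_ ?_
  · rw [show x ^ 4 - y ^ 4 = -y ^ 4 + x * x ^ 3 by ring]
    exact (h.symm.pow_left.neg_left).add_mul_left_left _
  · rw [show x ^ 4 - y ^ 4 = x ^ 4 + y * -y ^ 3 by ring]
    exact h.pow_left.add_mul_left_left _

end Integers

/-! ### The equation `x⁴ + 4y⁴ = z²` -/

section Fermat

lemma exists_pow_four_eq_sq {m n k : ℤ} (hmn : IsCoprime m n) (h : m * n = k ^ 2) :
    ∃ i : ℤ, m ^ 2 = i ^ 4 := by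
  obtain ⟨i, rfl | rfl⟩ := Int.sq_of_isCoprime hmn h <;> exact ⟨i, by ring⟩

lemma exists_sq_add_pow_four_eq {x y z : ℤ} (hx : Odd x) (hxy : IsCoprime x y) (hy : y ≠ 0)
    (h : x ^ 4 + 4 * y ^ 4 = z ^ 2) :
    ∃ i j : ℤ, x ^ 2 + j ^ 4 = i ^ 4 ∧ IsCoprime x j ∧ j ≠ 0 ∧ |z| = i ^ 4 + j ^ 4 := by
  have hz : 0 < z ^ 2 := h ▸ by positivity
  have htriple : PythagoreanTriple (x ^ 2) (2 * y ^ 2) |z| := by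
    rw [PythagoreanTriple, abs_mul_abs_self]
    linear_combination h
  have hx2 : IsCoprime x 2 := (Int.isCoprime_two_left.mpr hx).symm
  obtain ⟨m, n, hxmn, hymn, hzmn, hmn, -⟩ := htriple.coprime_classification'
    (Int.isCoprime_iff_gcd_eq_one.mp (hx2.pow_left.mul_right hxy.pow)) (Int.odd_iff.mp hx.pow)
    (abs_pos.mpr (sq_pos_iff.mp hz))
  rw [← Int.isCoprime_iff_gcd_eq_one] at hmn
  have hprod : m * n = y ^ 2 := by linarith
  obtain ⟨i, hi⟩ := exists_pow_four_eq_sq hmn hprod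
  obtain ⟨j, hj⟩ := exists_pow_four_eq_sq hmn.symm (mul_comm m n ▸ hprod)
  refine ⟨i, j, by linarith, ?_, ?_, by linarith⟩
  · have : IsCoprime (x ^ 2) (j ^ 4) := by
      rw [hxmn, ← hj]
      simpa [sub_eq_add_neg] using (hmn.pow (m := 2) (n := 2)).add_mul_left_left (-1)
    exact (IsCoprime.pow_iff two_pos four_pos).mp this
  · rintro rfl
    have hn : n = 0 := by simpa using hj
    exact pow_ne_zero 2 hy (by rw [← hprod, hn, mul_zero])

lemma exists_pow_four_add_four_mul_pow_four_eq {x i j : ℤ} (hx : Odd x) (hxj : IsCoprime x j)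
    (hj : j ≠ 0) (h : x ^ 2 + j ^ 4 = i ^ 4) :
    ∃ u v : ℤ, Odd u ∧ IsCoprime u v ∧ v ≠ 0 ∧ u ^ 4 + 4 * v ^ 4 = i ^ 2 := by
  have hi : 0 < i ^ 4 := h ▸ by positivity
  have hi0 : i ≠ 0 := by
    rintro rfl
    simp at hi
  have htriple : PythagoreanTriple x (j ^ 2) (i ^ 2) := by
    rw [PythagoreanTriple]
    linear_combination h
  obtain ⟨m, n, -, hjmn, himn, hmn, hpar, -⟩ := htriple.coprime_classification'
    (Int.isCoprime_iff_gcd_eq_one.mp hxj.pow_right)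
    (Int.odd_iff.mp hx) (sq_pos_of_ne_zero hi0)
  rw [← Int.isCoprime_iff_gcd_eq_one] at hmn
  obtain ⟨r, s, hr, hrs, hjrs, hirs⟩ : ∃ r s : ℤ, Odd r ∧ IsCoprime r s ∧
      r * (2 * s) = j ^ 2 ∧ r ^ 2 + s ^ 2 = i ^ 2 := by
    rcases hpar with ⟨-, hn⟩ | ⟨hm, -⟩
    · exact ⟨n, m, Int.odd_iff.mpr hn, hmn.symm, by linarith, by linarith⟩
    · exact ⟨m, n, Int.odd_iff.mpr hm, hmn, by linarith, by linarith⟩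
  have hr2s : IsCoprime r (2 * s) :=
    (Int.isCoprime_two_left.mpr hr).symm.mul_right hrs
  obtain ⟨u, hu⟩ := exists_pow_four_eq_sq hr2s hjrs
  obtain ⟨w, hw⟩ := exists_pow_four_eq_sq hr2s.symm (mul_comm r _ ▸ hjrs)
  obtain ⟨v, rfl⟩ : 2 ∣ w := Int.prime_two.dvd_of_dvd_pow
    (hw ▸ (Dvd.intro s rfl : (2 : ℤ) ∣ 2 * s).pow two_ne_zero)
  have hv : s ^ 2 = 4 * v ^ 4 := by linarith
  refine ⟨u, v, ?_, ?_, ?_, by linarith⟩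
  · exact (Int.odd_pow' four_ne_zero).mp (hu ▸ hr.pow)
  · have : IsCoprime (u ^ 4) (4 * v ^ 4) := hu ▸ hv ▸ hrs.pow
    exact (IsCoprime.pow_iff four_pos four_pos).mp this.of_mul_right_right
  · rintro rfl
    have hs0 : s = 0 := by simpa using hv
    exact pow_ne_zero 2 hj (by rw [← hjrs, hs0, mul_zero, mul_zero])

lemma pow_four_add_four_mul_pow_four_ne_sq_of_isCoprime {x y z : ℤ} (hx : Odd x)
    (hxy : IsCoprime x y) (hy : y ≠ 0) : x ^ 4 + 4 * y ^ 4 ≠ z ^ 2 := by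
  induction hn : z.natAbs using Nat.strong_induction_on generalizing x y z with
  | _ n ih =>
    subst hn
    intro h
    obtain ⟨i, j, hij, hxj, hj, hz⟩ := exists_sq_add_pow_four_eq hx hxy hy h
    obtain ⟨u, v, hu, huv, hv, huvi⟩ := exists_pow_four_add_four_mul_pow_four_eq hx hxj hj hij
    refine ih i.natAbs ?_ hu huv hv rfl huvi
    zify
    have hi4 : |i| ≤ i ^ 4 := by
      rw [← Even.pow_abs (by decide : Even 4) i, Int.abs_eq_natAbs]
      exact_mod_cast Nat.le_self_pow four_ne_zero i.natAbs
    have hj4 : 0 < j ^ 4 := by positivity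
    linarith

theorem pow_four_add_four_mul_pow_four_ne_sq {x y z : ℤ} (hx : x ≠ 0) (hy : y ≠ 0) :
    x ^ 4 + 4 * y ^ 4 ≠ z ^ 2 := by
  intro h
  obtain ⟨d, x, y, hd, hxy, rfl, rfl⟩ := exists_isCoprime_eq_mul (y := y) hx
  have hdz : (d ^ 2) ^ 2 ∣ z ^ 2 := ⟨x ^ 4 + 4 * y ^ 4, by linear_combination -h⟩
  obtain ⟨z, rfl⟩ := (Int.pow_dvd_pow_iff two_ne_zero).mp hdz
  have h' : x ^ 4 + 4 * y ^ 4 = z ^ 2 :=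
    mul_left_cancel₀ (pow_ne_zero 4 hd) (by linear_combination h)
  rcases Int.even_or_odd x with hx2 | hx2
  · -- Then `4` divides the equation, and the quotient has the same shape with `y` odd.
    obtain ⟨x, rfl⟩ := hx2.two_dvd
    have hy2 : Odd y := Int.isCoprime_two_left.mp hxy.of_mul_left_left
    obtain ⟨z, rfl⟩ : 2 ∣ z := Int.prime_two.dvd_of_dvd_pow (n := 2)
      ⟨2 * (4 * x ^ 4 + y ^ 4), by linear_combination -h'⟩
    exact pow_four_add_four_mul_pow_four_ne_sq_of_isCoprime hy2
      hxy.of_mul_left_right.symm (right_ne_zero_of_mul (right_ne_zero_of_mul hx))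
      (show y ^ 4 + 4 * x ^ 4 = z ^ 2 by linarith)
  · exact pow_four_add_four_mul_pow_four_ne_sq_of_isCoprime hx2 hxy (right_ne_zero_of_mul hy) h'

end Fermat

/-! ### Points whose roots are rational -/

/-- The curve `y² = x(x + a⁴)(x + b⁴)`; it is `EF2 p q` for `a = p² - q²` and `b = 2pq`. -/
def faceCurve {R : Type*} [CommRing R] (a b : R) : Set (R × R) :=
  affinePoints (a ^ 4 + b ^ 4) (a ^ 4 * b ^ 4)

/-- `x`, `y`, `z` are square roots of the values of `X`, `X + a⁴`, `X + b⁴` at a point of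
`Y² = X(X + a⁴)(X + b⁴)`. Over `ℚ` such points are the doubles of rational points of the curve. -/
structure RootTriple {R : Type*} [CommRing R] (a b x y z : R) : Prop where
  sq_add_pow_left : x ^ 2 + a ^ 4 = y ^ 2
  sq_add_pow_right : x ^ 2 + b ^ 4 = z ^ 2

namespace RootTriple

section CommRing

variable {R : Type*} [CommRing R] {a b x y z : R}

lemma symm (h : RootTriple a b x y z) : RootTriple b a x z y :=
  ⟨h.sq_add_pow_right, h.sq_add_pow_left⟩

lemma mem_faceCurve (h : RootTriple a b x y z) : (x ^ 2, x * y * z) ∈ faceCurve a b := by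
  simp only [faceCurve, affinePoints, Set.mem_ofPred_eq, mul_pow, ← h.sq_add_pow_left,
    ← h.sq_add_pow_right]
  ring

lemma left_ne_zero [LinearOrder R] [IsStrictOrderedRing R] (h : RootTriple a b x y z) (ha : a ≠ 0) :
    y ≠ 0 :=
  sq_pos_iff.mp (h.sq_add_pow_left ▸ by positivity)

end CommRing

section Field

variable {K : Type*} [Field K] {a b x y z : K}

/-- Translation by the `2`-torsion point `(0, 0)`. -/
lemma translate (h : RootTriple a b x y z) (hx : x ≠ 0) :
    RootTriple a b (a ^ 2 * b ^ 2 / x) (a ^ 2 * z / x) (b ^ 2 * y / x) := by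
  constructor <;> field_simp
  · linear_combination a ^ 4 * h.sq_add_pow_right
  · linear_combination b ^ 4 * h.sq_add_pow_left

/-- Duplication on the curve `y² = x(x + a⁴)(x + b⁴)`. -/
lemma double (h : RootTriple a b x y z) (h0 : 2 * x * y * z ≠ 0) :
    RootTriple a b ((x ^ 4 - a ^ 4 * b ^ 4) / (2 * x * y * z))
      ((x ^ 4 + 2 * a ^ 4 * x ^ 2 + a ^ 4 * b ^ 4) / (2 * x * y * z))
      ((x ^ 4 + 2 * b ^ 4 * x ^ 2 + a ^ 4 * b ^ 4) / (2 * x * y * z)) := by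
  have hyz : (2 * x * y * z) ^ 2 = 4 * x ^ 2 * (x ^ 2 + a ^ 4) * (x ^ 2 + b ^ 4) := by
    rw [h.sq_add_pow_left, h.sq_add_pow_right]
    ring
  constructor <;> rw [div_pow, div_pow, div_add' _ _ _ (pow_ne_zero 2 h0), hyz] <;> ring

lemma of_smul {d : K} (hd : d ≠ 0) (h : RootTriple (d * a) (d * b) x y z) :
    RootTriple a b (x / d ^ 2) (y / d ^ 2) (z / d ^ 2) := by
  constructor <;> field_simp
  · linear_combination h.sq_add_pow_left
  · linear_combination h.sq_add_pow_right

end Field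

section Int

lemma exists_eq_mul_and_isCoprime {g s t k m n y z : ℤ} (hgs : g * s ≠ 0)
    (hab : IsCoprime (g * s * t) (k * m * n))
    (h : RootTriple (g * s * t) (k * m * n) (g * s ^ 2 * (k * m ^ 2)) y z) :
    ∃ y', y = g * s ^ 2 * y' ∧ IsCoprime y' (g * k) := by
  have hy := h.sq_add_pow_left
  obtain ⟨y', rfl⟩ : g * s ^ 2 ∣ y := (Int.pow_dvd_pow_iff two_ne_zero).mp
    ⟨(k * m ^ 2) ^ 2 + (g * t ^ 2) ^ 2, by linear_combination -hy⟩
  have hgs2 : g * s ^ 2 ≠ 0 := by simpa using hgs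
  have hy' : y' ^ 2 = (k * m ^ 2) ^ 2 + (g * t ^ 2) ^ 2 :=
    mul_left_cancel₀ (pow_ne_zero 2 hgs2) (by linear_combination -hy)
  have hgt : IsCoprime (g * t) (k * m) :=
    (hab.of_isCoprime_of_dvd_left ⟨s, by ring⟩).of_isCoprime_of_dvd_right ⟨n, rfl⟩
  have hcop : IsCoprime (g * t ^ 2) (k * m ^ 2) :=
    ((hgt.pow (m := 2) (n := 2)).of_isCoprime_of_dvd_left ⟨g, by ring⟩).of_isCoprime_of_dvd_right
      ⟨k, by ring⟩
  refine ⟨y', rfl, IsCoprime.mul_right ?_ ?_⟩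
  · exact (isCoprime_left_of_sq_eq_sq_add_sq (hy'.trans (add_comm _ _)) hcop).of_mul_right_left
  · exact (isCoprime_left_of_sq_eq_sq_add_sq hy' hcop.symm).of_mul_right_left

lemma exists_two_mul_eq_sq_mul {a b x y z w : ℤ} (h : RootTriple a b x y z)
    (hab : IsCoprime a b) (ha : a ≠ 0) (hb : b ≠ 0) (hx : x ∣ a ^ 2 * b ^ 2)
    (hw : w ∣ a ^ 2 * b ^ 2) (hdouble : 2 * x * y * z * w = x ^ 4 - a ^ 4 * b ^ 4) :
    ∃ d c, d ≠ 0 ∧ c ∣ 2 ∧ 2 * w = d ^ 2 * c := by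
  obtain ⟨g, s, t, k, m, n, hst, hmn, rfl, rfl, rfl⟩ := exists_factors_of_dvd_sq_mul_sq ha hb hx
  have hgs : g * s ≠ 0 := left_ne_zero_of_mul ha
  have hkm : k * m ≠ 0 := left_ne_zero_of_mul hb
  have hgk : g * k ≠ 0 := mul_ne_zero (left_ne_zero_of_mul hgs) (left_ne_zero_of_mul hkm)
  obtain ⟨y, rfl, hy⟩ := h.exists_eq_mul_and_isCoprime hgs hab
  obtain ⟨z, rfl, hz⟩ := exists_eq_mul_and_isCoprime hkm hab.symm (mul_comm (g * s ^ 2) _ ▸ h.symm)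
  have hw' : 2 * (y * z) * w = (g * k) ^ 2 * ((s * m) ^ 4 - (t * n) ^ 4) := by
    have hx0 := ne_zero_of_dvd_ne_zero (mul_ne_zero (pow_ne_zero 2 ha) (pow_ne_zero 2 hb)) hx
    exact mul_left_cancel₀ (pow_ne_zero 2 hx0) (by linear_combination hdouble)
  obtain ⟨c, hc⟩ : y * z ∣ (s * m) ^ 4 - (t * n) ^ 4 :=
    ((hy.mul_left (mul_comm k g ▸ hz)).pow_right (n := 2)).dvd_of_dvd_mul_left
      ⟨2 * w, by linear_combination -hw'⟩
  have h2w : 2 * w = (g * k) ^ 2 * c := by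
    have hyz : y * z ≠ 0 := mul_ne_zero (right_ne_zero_of_mul (h.left_ne_zero ha))
      (right_ne_zero_of_mul (h.symm.left_ne_zero hb))
    exact mul_left_cancel₀ hyz (by linear_combination hw' + (g * k) ^ 2 * hc)
  have hsm : IsCoprime (s * m) (t * n) := by
    have hsn : IsCoprime s n :=
      (hab.of_isCoprime_of_dvd_left ⟨g * t, by ring⟩).of_isCoprime_of_dvd_right ⟨k * m, by ring⟩
    have hmt : IsCoprime m t :=
      (hab.symm.of_isCoprime_of_dvd_left ⟨k * n, by ring⟩).of_isCoprime_of_dvd_right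
        ⟨g * s, by ring⟩
    exact (hst.mul_right hsn).mul_left (hmt.mul_right hmn)
  have hcop : IsCoprime c ((s * m * (t * n)) ^ 2) :=
    (hc ▸ isCoprime_pow_four_sub_pow_four hsm).of_mul_left_right.pow_right
  refine ⟨g * k, c, hgk, hcop.dvd_of_dvd_mul_right ?_, h2w⟩
  refine (mul_dvd_mul_iff_left (pow_ne_zero 2 hgk)).mp ?_
  rw [← h2w]
  convert mul_dvd_mul_left 2 hw using 1
  ring

lemma two_mul_ne_sq_mul {a b x y z d c : ℤ} (h : RootTriple a b x y z) (ha : a ≠ 0) (hd : d ≠ 0)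
    (hc : c ∣ 2) : 2 * x ≠ d ^ 2 * c := by
  intro hx
  have hx4 : 4 * x ^ 2 = d ^ 4 * c ^ 2 := by linear_combination (2 * x + d ^ 2 * c) * hx
  have hy := h.sq_add_pow_left
  rw [← Int.natAbs_sq c] at hx4
  rcases (Nat.dvd_prime Nat.prime_two).mp (Int.natAbs_dvd_natAbs.mpr hc) with hc | hc <;>
    rw [hc] at hx4 <;> push_cast at hx4
  · exact pow_four_add_four_mul_pow_four_ne_sq hd ha
      (show d ^ 4 + 4 * a ^ 4 = (2 * y) ^ 2 by linarith)
  · exact not_fermat_42 hd ha (show d ^ 4 + a ^ 4 = y ^ 2 by linarith)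

end Int

section Rat

variable {a b : ℤ} {x y z : ℚ}

lemma exists_intCast_eq (hfin : (faceCurve (a : ℚ) b).Finite) (h : RootTriple (a : ℚ) b x y z) :
    ∃ m n r : ℤ, RootTriple a b m n r ∧ (m : ℚ) = x ∧ (n : ℚ) = y ∧ (r : ℚ) = z := by
  have hint {t : ℚ} (ht : IsIntegral ℤ (t ^ 2)) : ∃ i : ℤ, (i : ℚ) = t :=
    IsIntegrallyClosed.isIntegral_iff.mp (ht.of_pow two_pos)
  have hx : IsIntegral ℤ (x ^ 2) := isIntegral_of_mem_affinePoints
    (c₂ := a ^ 4 + b ^ 4) (c₄ := a ^ 4 * b ^ 4) (by simpa [faceCurve] using hfin)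
    (by simpa [faceCurve] using h.mem_faceCurve)
  have hcast (c : ℤ) : IsIntegral ℤ ((c : ℚ) ^ 4) := (isIntegral_algebraMap (x := c)).pow 4
  obtain ⟨m, rfl⟩ := hint hx
  obtain ⟨n, rfl⟩ := hint (h.sq_add_pow_left ▸ hx.add (hcast a))
  obtain ⟨r, rfl⟩ := hint (h.sq_add_pow_right ▸ hx.add (hcast b))
  exact ⟨m, n, r, ⟨by exact_mod_cast h.sq_add_pow_left, by exact_mod_cast h.sq_add_pow_right⟩,
    rfl, rfl, rfl⟩

/-- The point and its translate by `(0, 0)` are both integral. -/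
lemma exists_intCast_eq_and_dvd (hfin : (faceCurve (a : ℚ) b).Finite)
    (h : RootTriple (a : ℚ) b x y z) (hx : x ≠ 0) :
    ∃ m n r : ℤ, RootTriple a b m n r ∧ m ∣ a ^ 2 * b ^ 2 ∧
      (m : ℚ) = x ∧ (n : ℚ) = y ∧ (r : ℚ) = z := by
  obtain ⟨m, n, r, hmnr, rfl, hn, hr⟩ := exists_intCast_eq hfin h
  obtain ⟨k, -, -, -, hk, -, -⟩ := exists_intCast_eq hfin (h.translate hx)
  refine ⟨m, n, r, hmnr, ⟨k, ?_⟩, rfl, hn, hr⟩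
  rw [eq_div_iff hx] at hk
  exact_mod_cast (hk.symm.trans (mul_comm _ _))

lemma pow_four_eq_of_isCoprime (hfin : (faceCurve (a : ℚ) b).Finite) (hab : IsCoprime a b)
    (ha : a ≠ 0) (hb : b ≠ 0) (h : RootTriple (a : ℚ) b x y z) (hx : x ≠ 0) :
    x ^ 4 = a ^ 4 * b ^ 4 := by
  by_contra hne
  have h0 : 2 * x * y * z ≠ 0 := mul_ne_zero (mul_ne_zero (mul_ne_zero two_ne_zero hx)
    (h.left_ne_zero (Int.cast_ne_zero.mpr ha))) (h.symm.left_ne_zero (Int.cast_ne_zero.mpr hb))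
  obtain ⟨w, n, _, hw, hwdvd, hwx, -, -⟩ := exists_intCast_eq_and_dvd hfin (h.double h0)
    (div_ne_zero (sub_ne_zero.mpr hne) h0)
  obtain ⟨x, y, z, hxyz, hxdvd, rfl, rfl, rfl⟩ := exists_intCast_eq_and_dvd hfin h hx
  have hdouble : 2 * x * y * z * w = x ^ 4 - a ^ 4 * b ^ 4 := by
    rw [eq_div_iff h0, mul_comm] at hwx
    exact_mod_cast hwx
  obtain ⟨d, c, hd, hc, hdc⟩ := hxyz.exists_two_mul_eq_sq_mul hab ha hb hxdvd hwdvd hdouble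
  exact hw.two_mul_ne_sq_mul ha hd hc hdc

end Rat

end RootTriple

theorem RootTriple.pow_four_eq_of_finite {a b : ℤ} {x y z : ℚ}
    (hfin : (faceCurve (a : ℚ) b).Finite) (ha : a ≠ 0) (hb : b ≠ 0)
    (h : RootTriple (a : ℚ) b x y z) (hx : x ≠ 0) : x ^ 4 = a ^ 4 * b ^ 4 := by
  obtain ⟨d, a, b, hd, hab, rfl, rfl⟩ := exists_isCoprime_eq_mul (y := b) ha
  have hdQ : (d : ℚ) ≠ 0 := Int.cast_ne_zero.mpr hd
  push_cast at hfin h ⊢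
  have hfin' : (faceCurve (a : ℚ) b).Finite := by
    simp only [faceCurve] at hfin ⊢
    refine affinePoints_finite_of_scale (pow_ne_zero 2 hdQ) (hfin.subset (Eq.subset ?_))
    congr 1 <;> ring
  have hx4 := RootTriple.pow_four_eq_of_isCoprime hfin' hab (right_ne_zero_of_mul ha)
    (right_ne_zero_of_mul hb) (h.of_smul hdQ) (div_ne_zero hx (pow_ne_zero 2 hdQ))
  field_simp at hx4
  linear_combination hx4

/-- The cuboid has edges `u√M`, `v√M` and `w`. -/
lemma rootTriple_of_cuboid {K : Type*} [Field K] {a b c u v w M f g k : K} (hw : w ≠ 0)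
    (habc : a ^ 2 + b ^ 2 = c ^ 2) (huv : u * b = v * a) (hf : M * u ^ 2 + w ^ 2 = f ^ 2)
    (hg : M * v ^ 2 + w ^ 2 = g ^ 2) (hk : M * (u ^ 2 + v ^ 2) + w ^ 2 = k ^ 2) :
    RootTriple a b (a * b * k / w) (a * c * g / w) (b * c * f / w) := by
  have huv2 : u ^ 2 * b ^ 2 = v ^ 2 * a ^ 2 := by linear_combination (u * b + v * a) * huv
  constructor <;> field_simp
  · linear_combination a ^ 2 * (c ^ 2 * hg - b ^ 2 * hk + (M * v ^ 2 + w ^ 2) * habc + M * huv2)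
  · linear_combination b ^ 2 * (c ^ 2 * hf - a ^ 2 * hk + (M * u ^ 2 + w ^ 2) * habc - M * huv2)

lemma sq_eq_sq_of_cuboid {a b c u v w M f g k : ℤ}
    (hfin : (faceCurve (a : ℚ) b).Finite) (ha : a ≠ 0) (hb : b ≠ 0) (hw : w ≠ 0)
    (hk0 : k ≠ 0) (habc : a ^ 2 + b ^ 2 = c ^ 2) (huv : u * b = v * a)
    (hf : M * u ^ 2 + w ^ 2 = f ^ 2) (hg : M * v ^ 2 + w ^ 2 = g ^ 2)
    (hk : M * (u ^ 2 + v ^ 2) + w ^ 2 = k ^ 2) : k ^ 2 = w ^ 2 := by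
  have hwQ : (w : ℚ) ≠ 0 := Int.cast_ne_zero.mpr hw
  have hroots : RootTriple (a : ℚ) b (a * b * k / w) (a * c * g / w) (b * c * f / w) :=
    rootTriple_of_cuboid (u := (u : ℚ)) (v := v) (M := M) hwQ (by exact_mod_cast habc)
      (by exact_mod_cast huv) (by exact_mod_cast hf) (by exact_mod_cast hg) (by exact_mod_cast hk)
  have habQ : (a : ℚ) * b ≠ 0 := by exact_mod_cast mul_ne_zero ha hb
  have hpow := hroots.pow_four_eq_of_finite hfin ha hb
    (div_ne_zero (mul_ne_zero habQ (Int.cast_ne_zero.mpr hk0)) hwQ)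
  have hkw : (k : ℚ) ^ 4 = w ^ 4 := by
    rw [div_pow, mul_pow, mul_pow, div_eq_iff (pow_ne_zero 4 hwQ)] at hpow
    exact mul_left_cancel₀ (pow_ne_zero 4 habQ) (by linear_combination hpow)
  have hkw' : (k ^ 2) ^ 2 = (w ^ 2) ^ 2 := by
    rw [← pow_mul, ← pow_mul]
    exact_mod_cast hkw
  exact (sq_eq_sq₀ (sq_nonneg k) (sq_nonneg w)).mp hkw'

lemma EF2_eq_faceCurve (p q : ℤ) :
    EF2 p q = faceCurve ((p ^ 2 - q ^ 2 : ℤ) : ℚ) (2 * p * q : ℤ) := by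
  ext P
  simp only [EF2, faceCurve, affinePoints, Set.mem_ofPred_eq]
  push_cast
  ring_nf

theorem no_FBPC_with_face_ratio_general (p q : ℤ) (hq : 0 < q) (hqp : q < p)
    (h : (EF2 p q).Finite) :
    ¬ ∃ u v W M : ℤ, 0 < u ∧ 0 < W ∧ 0 < M ∧ u * (2 * p * q) = v * (p ^ 2 - q ^ 2) ∧
      IsSquare W ∧ IsSquare (M * u ^ 2 + W) ∧ IsSquare (M * v ^ 2 + W) ∧
      IsSquare (M * (u ^ 2 + v ^ 2) + W) := by
  simp only [isSquare_iff_exists_sq]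
  rintro ⟨u, v, _, M, hu, hW, hM, huv, ⟨w, rfl⟩, ⟨f, hf⟩, ⟨g, hg⟩, ⟨k, hk⟩⟩
  have ha : p ^ 2 - q ^ 2 ≠ 0 := by nlinarith
  have hb : 2 * p * q ≠ 0 := by nlinarith
  have hwk : w ^ 2 < k ^ 2 := by
    have hMuv : 0 < M * (u ^ 2 + v ^ 2) := by positivity
    linarith
  exact hwk.ne' (sq_eq_sq_of_cuboid (EF2_eq_faceCurve p q ▸ h) ha hb (sq_pos_iff.mp hW)
    (sq_pos_iff.mp (hW.trans hwk)) (c := p ^ 2 + q ^ 2) (by ring) huv hf hg hk)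

/-- If EF2 has only finitely many rational points, then there is no F-BPC (and in
particular no perfect cuboid, the case `M = 1`) whose Pythagorean face has aspect ratio
`(p²−q²) : 2pq`. -/
theorem no_FBPC_with_face_ratio
    (p q : ℤ) (hq : 0 < q) (hqp : q < p) (hcop : IsCoprime p q) (hpar : p % 2 ≠ q % 2)
    (h : (EF2 p q).Finite) :
    ¬ ∃ (u v W M : ℤ), 0 < u ∧ 0 < v ∧ 0 < W ∧ 0 < M ∧ Squarefree M ∧
      u * (2 * p * q) = v * (p ^ 2 - q ^ 2) ∧ IsSquare (u ^ 2 + v ^ 2) ∧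
      IsSquare W ∧ IsSquare (M * u ^ 2 + W) ∧ IsSquare (M * v ^ 2 + W) ∧
      IsSquare (M * (u ^ 2 + v ^ 2) + W) := by
  rintro ⟨u, v, W, M, hu, -, hW, hM, -, huv, -, hsq⟩
  exact no_FBPC_with_face_ratio_general p q hq hqp h ⟨u, v, W, M, hu, hW, hM, huv, hsq⟩
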